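/- If (D, D') is a subsume transition between deliberative coalition structures involving coalitions (C₁, p₁), (C₂, p₂) and compromise proposal p, then λ(D') − λ(D) = 2·|C₁^p|·(|C₂| + |C₁^p| − |C₁|) ≥ 2, where λ is the potential function that sums the squares of the coalition sizes. In particular, every subsume transition increases the potential by at least 2, and hence every sequence of consecutive subsume transitions over n agents has at most n² transitions. -/

import Mathlib

/-!
Write `a = |C₁^p|`, `b = |C₂|`, `c = |C₁|`. In a coalition structure the agent sets `C₁` and `C₂`
are disjoint, so a subsume transition replaces coalition sizes `c, b` by `a + b, c - a`, and
`(a + b)² + (c - a)² - c² - b² = 2a(b + a - c)`. Since `a ≥ 1` and `a + b > c`, this is at least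
`2` (`potential_sub_potential`). Sums of squares of naturals are at most the square of the sum
(`potential_le_sq_sum`), and the coalition sizes sum to `|V|`, so the potential always lies
in `[0, |V|²]`; a chain of `k` transitions raises it by at least `2k`, whence `k ≤ |V|²`.
-/

/-!
Formalization of deliberative coalition formation (Elkind et al., "United for Change:
Deliberative Coalition Formation to Change the Status Quo").

Agents and proposals live in a metric space `M`; `V` is the finite set of agents,
`X ⊆ M` the set of proposals, `r ∈ X` the status quo.  A deliberative coalition
structure is a multiset of deliberative coalitions whose agent sets partition `V`
(empty coalitions are allowed).
-/

open scoped Classical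
noncomputable section

variable {M : Type*}

/-- Agent `v` approves proposal `p` relative to status quo `r`
if `v` is strictly closer to `p` than to `r`. -/
def Approves [MetricSpace M] (r v p : M) : Prop := dist v p < dist v r

/-- The set `C^p` of agents in `C` that approve proposal `p`. -/
def approvers [MetricSpace M] (r : M) (C : Finset M) (p : M) : Finset M :=
  C.filter fun v => Approves r v p

/-- `(C, p)` is a deliberative coalition: `C ⊆ V`, `p ∈ X`, and either `p = r` and no
agent of `C` approves any proposal in `X \ {r}`, or `p ≠ r` and every agent of `C`
approves `p`. -/
def IsCoalition [MetricSpace M] (V : Finset M) (X : Set M) (r : M)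
    (C : Finset M) (p : M) : Prop :=
  C ⊆ V ∧ p ∈ X ∧
    ((p = r ∧ ∀ v ∈ C, ∀ x ∈ X, x ≠ r → ¬ Approves r v x) ∨
     (p ≠ r ∧ ∀ v ∈ C, Approves r v p))

/-- `D` is a deliberative coalition structure: a (finite) multiset of deliberative
coalitions whose agent sets are pairwise disjoint with union `V` (equivalently, the
multiset sum of the agent sets is exactly `V`). Empty coalitions are allowed. -/
def IsStructure [MetricSpace M] (V : Finset M) (X : Set M) (r : M)
    (D : Multiset (Finset M × M)) : Prop :=
  (∀ c ∈ D, IsCoalition V X r c.1 c.2) ∧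
    (D.map fun c => c.1.val).sum = V.val

/-- Subsume transition: for a proposal `p ∈ X` with `C₂^p = C₂` and `C₁^p ≠ ∅`, the
coalitions `(C₁, p₁)` and `(C₂, p₂)` are replaced by `(C₁^p ∪ C₂, p)` and
`(C₁ \ C₁^p, p₁)`, provided `|C₁^p ∪ C₂| > |C₁|`. -/
def SubsumeTransition [MetricSpace M] (V : Finset M) (X : Set M) (r : M)
    (D D' : Multiset (Finset M × M)) : Prop :=
  IsStructure V X r D ∧ IsStructure V X r D' ∧
  ∃ (C₁ C₂ : Finset M) (p₁ p₂ p : M) (D₀ : Multiset (Finset M × M)),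
    p ∈ X ∧
    approvers r C₂ p = C₂ ∧ (approvers r C₁ p).Nonempty ∧
    C₁.card < (approvers r C₁ p ∪ C₂).card ∧
    D = (C₁, p₁) ::ₘ (C₂, p₂) ::ₘ D₀ ∧
    D' = (approvers r C₁ p ∪ C₂, p) ::ₘ (C₁ \ approvers r C₁ p, p₁) ::ₘ D₀

/-- The potential of a coalition structure: the sum of the squares of the coalition
sizes. -/
def potential (D : Multiset (Finset M × M)) : ℕ :=
  (D.map fun c => c.1.card ^ 2).sum

theorem potential_cons (c : Finset M × M) (D : Multiset (Finset M × M)) :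
    potential (c ::ₘ D) = c.1.card ^ 2 + potential D := by
  simp [potential]

theorem potential_le_sq_sum (D : Multiset (Finset M × M)) :
    potential D ≤ (D.map fun c => c.1.card).sum ^ 2 := by
  induction D using Multiset.induction_on with
  | empty => simp [potential]
  | cons c D ih =>
    rw [potential_cons, Multiset.map_cons, Multiset.sum_cons]
    nlinarith [Nat.zero_le (c.1.card * (D.map fun c => c.1.card).sum)]

theorem IsStructure.sum_card [MetricSpace M] {V : Finset M} {X : Set M} {r : M}
    {D : Multiset (Finset M × M)} (h : IsStructure V X r D) :
    (D.map fun c => c.1.card).sum = V.card := by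
  rw [Finset.card_def, ← h.2]
  clear h
  induction D using Multiset.induction_on with
  | empty => simp
  | cons c D ih => simp [ih]

theorem IsStructure.potential_le [MetricSpace M] {V : Finset M} {X : Set M} {r : M}
    {D : Multiset (Finset M × M)} (h : IsStructure V X r D) :
    potential D ≤ V.card ^ 2 :=
  h.sum_card ▸ potential_le_sq_sum D

/-- The multiset sum of the agent sets is `V.val`, which has no duplicates, so two distinct
members of the structure share no agent. -/
theorem IsStructure.disjoint [MetricSpace M] {V : Finset M} {X : Set M} {r : M}
    {C₁ C₂ : Finset M} {p₁ p₂ : M} {D₀ : Multiset (Finset M × M)}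
    (h : IsStructure V X r ((C₁, p₁) ::ₘ (C₂, p₂) ::ₘ D₀)) : Disjoint C₁ C₂ := by
  have hnd := V.nodup
  rw [← h.2, Multiset.map_cons, Multiset.map_cons, Multiset.sum_cons, Multiset.sum_cons,
    ← add_assoc] at hnd
  exact Finset.disjoint_val.1 (Multiset.nodup_add.1 (Multiset.nodup_add.1 hnd).1).2.2

/-- The exact potential gain of a subsume transition, and its lower bound `2`. That the source is
a structure gives the disjointness of `C₁` and `C₂`. -/
theorem potential_sub_potential [MetricSpace M] {V : Finset M} {X : Set M} {r : M}
    {C₁ C₂ : Finset M} {p₁ p₂ p : M} {D₀ : Multiset (Finset M × M)}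
    (h : IsStructure V X r ((C₁, p₁) ::ₘ (C₂, p₂) ::ₘ D₀))
    (hne : (approvers r C₁ p).Nonempty)
    (hlt : C₁.card < (approvers r C₁ p ∪ C₂).card) :
    (potential ((approvers r C₁ p ∪ C₂, p) ::ₘ (C₁ \ approvers r C₁ p, p₁) ::ₘ D₀) : ℤ) -
          potential ((C₁, p₁) ::ₘ (C₂, p₂) ::ₘ D₀) =
        2 * (approvers r C₁ p).card *
          ((C₂.card : ℤ) + (approvers r C₁ p).card - C₁.card) ∧
      2 ≤ (potential ((approvers r C₁ p ∪ C₂, p) ::ₘ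
            (C₁ \ approvers r C₁ p, p₁) ::ₘ D₀) : ℤ) -
          potential ((C₁, p₁) ::ₘ (C₂, p₂) ::ₘ D₀) := by
  have hsub : approvers r C₁ p ⊆ C₁ := Finset.filter_subset _ _
  have hunion := Finset.card_union_of_disjoint (Finset.disjoint_of_subset_left hsub h.disjoint)
  have hsdiff := Finset.card_sdiff_add_card_eq_card hsub
  have hpos := hne.card_pos
  rw [hunion] at hlt
  simp only [potential_cons, hunion]
  generalize (approvers r C₁ p).card = a at *
  generalize (C₁ \ approvers r C₁ p).card = d at *
  rw [← hsdiff] at hlt ⊢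
  push_cast
  have hpos' : (1 : ℤ) ≤ a := by exact_mod_cast hpos
  have hlt' : (d : ℤ) + 1 ≤ C₂.card := by omega
  constructor
  · ring
  · nlinarith [mul_nonneg (sub_nonneg.2 hpos') (sub_nonneg.2 hlt')]

theorem SubsumeTransition.potential_add_two_le [MetricSpace M] {V : Finset M} {X : Set M} {r : M}
    {D D' : Multiset (Finset M × M)} (h : SubsumeTransition V X r D D') :
    potential D + 2 ≤ potential D' := by
  obtain ⟨hD, -, C₁, C₂, p₁, p₂, p, D₀, -, -, hne, hlt, rfl, rfl⟩ := h
  have := (potential_sub_potential hD hne hlt).2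
  omega

/-- If `(D, D')` is a subsume transition involving coalitions
`(C₁, p₁)`, `(C₂, p₂)` and compromise proposal `p`, then
`λ(D') − λ(D) = 2·|C₁^p|·(|C₂| + |C₁^p| − |C₁|) ≥ 2`, where `λ` sums the squares of
the coalition sizes; hence every sequence of consecutive subsume transitions over `n`
agents has at most `n²` transitions. -/
theorem subsume_potential_increase_and_length_le_sq [MetricSpace M]
    (V : Finset M) (X : Set M) (r : M) (hr : r ∈ X) :
    (∀ (D D' : Multiset (Finset M × M)) (C₁ C₂ : Finset M) (p₁ p₂ p : M)
        (D₀ : Multiset (Finset M × M)),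
      IsStructure V X r D → IsStructure V X r D' → p ∈ X →
      approvers r C₂ p = C₂ → (approvers r C₁ p).Nonempty →
      C₁.card < (approvers r C₁ p ∪ C₂).card →
      D = (C₁, p₁) ::ₘ (C₂, p₂) ::ₘ D₀ →
      D' = (approvers r C₁ p ∪ C₂, p) ::ₘ (C₁ \ approvers r C₁ p, p₁) ::ₘ D₀ →
      (potential D' : ℤ) - potential D =
          2 * (approvers r C₁ p).card *
            ((C₂.card : ℤ) + (approvers r C₁ p).card - C₁.card) ∧
        2 ≤ (potential D' : ℤ) - potential D) ∧
    (∀ (k : ℕ) (Ds : ℕ → Multiset (Finset M × M)),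
      (∀ i < k, SubsumeTransition V X r (Ds i) (Ds (i + 1))) → k ≤ V.card ^ 2) := by
  refine ⟨?_, ?_⟩
  · rintro D D' C₁ C₂ p₁ p₂ p D₀ hD - - - hne hlt rfl rfl
    exact potential_sub_potential hD hne hlt
  · intro k Ds hDs
    have key : ∀ i ≤ k, 2 * i ≤ potential (Ds i) := by
      intro i
      induction i with
      | zero => simp
      | succ i ih =>
        intro hi
        have h₁ := ih (by omega)
        have h₂ := (hDs i hi).potential_add_two_le
        omega
    cases k with
    | zero => exact Nat.zero_le _
    | succ k =>
      -- the last structure is known to be a structure as the target of the last transition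
      have h₁ := key (k + 1) le_rfl
      have h₂ := (hDs k (Nat.lt_succ_self k)).2.1.potential_le
      omega
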